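/- arXiv:2404.00175 — 7 statements merged into one kernel-verified Lean document; each statement's English description precedes it below -/
import Mathlib

section
/- Let R be a commutative ring and let v₁, v₂, v₃ ∈ R³, with coordinates (v_i)₁, (v_i)₂, (v_i)₃. For i ∈ {1,2,3} (indices taken mod 3 in {1,2,3}) set v' = v_{i+1}, v'' = v_{i+2} and define the conic q_i(x,y,z) = (v')₃(v'')₃((v')₂(v'')₁ − (v'')₂(v')₁)·xy + (v')₁(v'')₁((v')₃(v'')₂ − (v'')₃(v')₂)·yz + (v')₂(v'')₂((v')₁(v'')₃ − (v'')₁(v')₃)·zx. Then for every m ∈ {1,2,3} and every (x,y,z) ∈ R³ one has (v₁)_m · |v₁ e_m p| · q₁(x,y,z) + (v₂)_m · |v₂ e_m p| · q₂(x,y,z) + (v₃)_m · |v₃ e_m p| · q₃(x,y,z) = 0, where p = (x,y,z) and e₁, e₂, e₃ are the standard basis vectors of R³. (This is the linear relation among the three cubics ℓ_{i, j+4}·q_i, with coefficients given by the m-th coordinates of v₁, v₂, v₃, which the paper uses to produce the relations among the three paths from the vertex (1,0) of its quiver, for the point configuration normalized so that p₄, p₅, p₆ are the standard basis vectors.) 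-/
/-- The determinant of the 3 × 3 matrix over a commutative ring `R`
whose columns are `u`, `v`, `w : Fin 3 → R`. -/
def det3 {R : Type*} [CommRing R] (u v w : Fin 3 → R) : R :=
  Matrix.det (Matrix.of fun i j => ![u, v, w] j i)

/-- The conic
`q(x,y,z) = (v')₃(v'')₃((v')₂(v'')₁ − (v'')₂(v')₁)·xy
  + (v')₁(v'')₁((v')₃(v'')₂ − (v'')₃(v')₂)·yz
  + (v')₂(v'')₂((v')₁(v'')₃ − (v'')₁(v')₃)·zx`
(coordinates of a vector `v : Fin 3 → R` indexed by `0, 1, 2`). -/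
def conic {R : Type*} [CommRing R] (v' v'' : Fin 3 → R) (x y z : R) : R :=
  v' 2 * v'' 2 * (v' 1 * v'' 0 - v'' 1 * v' 0) * (x * y)
    + v' 0 * v'' 0 * (v' 2 * v'' 1 - v'' 2 * v' 1) * (y * z)
    + v' 1 * v'' 1 * (v' 0 * v'' 2 - v'' 0 * v' 2) * (z * x)

/-- For `v₁, v₂, v₃ ∈ R³`, every `m ∈ {1,2,3}` and every `(x,y,z) ∈ R³`, one has
`(v₁)ₘ·|v₁ eₘ p|·q₁ + (v₂)ₘ·|v₂ eₘ p|·q₂ + (v₃)ₘ·|v₃ eₘ p|·q₃ = 0`,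
where `p = (x,y,z)`, `eₘ` is the `m`-th standard basis vector, and
`qᵢ` is the conic built from `v_{i+1}, v_{i+2}` (indices mod 3). -/
theorem stmt2 {R : Type*} [CommRing R] (v : Fin 3 → (Fin 3 → R)) (m : Fin 3) (x y z : R) :
    ∑ i : Fin 3,
        v i m * det3 (v i) (Pi.single m 1) ![x, y, z] * conic (v (i + 1)) (v (i + 2)) x y z
      = 0 := by
  have h1 : (1 : Fin 3) + 1 = 2 := rfl
  have h2 : (1 : Fin 3) + 2 = 0 := rfl
  have h3 : (2 : Fin 3) + 1 = 0 := rfl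
  have h4 : (2 : Fin 3) + 2 = 1 := rfl
  fin_cases m <;>
    simp [Fin.sum_univ_three, det3, conic, Matrix.det_fin_three, Pi.single_apply,
      h1, h2, h3, h4] <;>
    ring
end

section
/- Every nonempty proper subset S ⊊ Q₀ that is closed under the arrows of Q (i.e., for every arrow x_{i,j,k}, if (i, j) ∈ S then (i + k, j + 1) ∈ S) satisfies Σ_{v ∈ S} θ(v) > 0. (This is the combinatorial content of the paper's claim that every point of the dense torus (G_m)^{Q₁}, i.e., every representation of Q of dimension vector (1,…,1) with all arrow maps nonzero, is θ-stable.) -/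
/-- The stability parameter `θ : Q₀ → ℤ` on the vertex set
`Q₀ = ℤ/3ℤ × ℤ/3ℤ`: `θ(i,0) = −11`, `θ(0,1) = θ(1,1) = 3`, `θ(2,1) = 6`,
`θ(i,2) = 7`. -/
def theta : ZMod 3 × ZMod 3 → ℤ := fun v =>
  if v.2 = 0 then -11
  else if v.2 = 1 then (if v.1 = 2 then 6 else 3)
  else 7

/-- Every nonempty proper subset `S ⊊ Q₀` that is closed under the arrows
`x_{i,j,k} : (i,j) → (i+k, j+1)` (for `i, k ∈ ℤ/3ℤ` and `j ∈ {0,1}`) of the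
quiver `Q` satisfies `Σ_{v ∈ S} θ(v) > 0`. -/
theorem stmt5 (S : Finset (ZMod 3 × ZMod 3)) (hne : S.Nonempty)
    (hproper : S ≠ Finset.univ)
    (hclosed : ∀ i k j : ZMod 3, (j = 0 ∨ j = 1) →
      (i, j) ∈ S → (i + k, j + 1) ∈ S) :
    0 < ∑ v ∈ S, theta v := by
  classical
  -- indicator function of `S`
  obtain ⟨f, hf⟩ : ∃ f : ZMod 3 × ZMod 3 → ℤ, ∀ v, f v = if v ∈ S then 1 else 0 :=
    ⟨_, fun _ => rfl⟩
  have hsum : ∑ v ∈ S, theta v = ∑ v, f v * theta v := by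
    simp [hf]
  have hcard : (S.card : ℤ) = ∑ v, f v := by
    simp [hf]
  have hpos : 0 < S.card := hne.card_pos
  have hlt : S.card < 9 := by
    have h := Finset.card_lt_univ_of_notMem
      (Classical.choose_spec (not_forall.mp fun h => hproper (Finset.eq_univ_iff_forall.mpr h)))
    simpa [ZMod.card] using h
  have h0 : ∀ v, 0 ≤ f v ∧ f v ≤ 1 := by
    intro v
    rw [hf]
    split_ifs <;> simp
  have hmono : ∀ j : ZMod 3, (j = 0 ∨ j = 1) → ∀ i m : ZMod 3, f (i, j) ≤ f (m, j + 1) := by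
    intro j hj i m
    by_cases hi : (i, j) ∈ S
    · have hm := hclosed i (m - i) j hj hi
      rw [add_sub_cancel] at hm
      simp [hf, hi, hm]
    · have := (h0 (m, j + 1)).1
      simpa [hf (i, j), hi] using this
  have h1 := hmono 0 (Or.inl rfl)
  have h2 := hmono 1 (Or.inr rfl)
  have e1 : (0 + 1 : ZMod 3) = 1 := by decide
  have e2 : (1 + 1 : ZMod 3) = 2 := by decide
  rw [e1] at h1
  rw [e2] at h2
  have huniv : ∀ g : ZMod 3 → ℤ, ∑ x, g x = g 0 + g 1 + g 2 := fun g => Fin.sum_univ_three g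
  have t0 : ∀ i, theta (i, 0) = -11 := by decide
  have t10 : theta (0, 1) = 3 := by decide
  have t11 : theta (1, 1) = 3 := by decide
  have t12 : theta (2, 1) = 6 := by decide
  have t2 : ∀ i, theta (i, 2) = 7 := by decide
  rw [hsum]
  simp only [Fintype.sum_prod_type, huniv, t0, t10, t11, t12, t2] at hcard ⊢
  have b := h0
  have := h1 0 0; have := h1 0 1; have := h1 0 2
  have := h1 1 0; have := h1 1 1; have := h1 1 2
  have := h1 2 0; have := h1 2 1; have := h1 2 2
  have := h2 0 0; have := h2 0 1; have := h2 0 2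
  have := h2 1 0; have := h2 1 1; have := h2 1 2
  have := h2 2 0; have := h2 2 1; have := h2 2 2
  have := h0 (0, 0); have := h0 (1, 0); have := h0 (2, 0)
  have := h0 (0, 1); have := h0 (1, 1); have := h0 (2, 1)
  have := h0 (0, 2); have := h0 (1, 2); have := h0 (2, 2)
  clear b hmono h1 h2 h0 hf hsum
  omega
end

section
/- Let V and E be nonempty finite types with maps s, t : E → V forming a connected quiver, and let G be a commutative group. Define γ : (V → G) → (E → G) by γ(λ)(e) = λ(t e) · λ(s e)⁻¹. Then the quotient group (E → G) / range(γ) is isomorphic to G^{|E| − |V| + 1}, i.e., to the group of functions from a set of cardinality |E| − |V| + 1 to G; in particular range(γ) is a direct factor of (E → G). (This is the paper's identification of the torus T = coker(γ) as G_m^{|Q₁| − |Q₀| + 1} and the splitting of the sequence 1 → K → (G_m)^{Q₁} → T → 1.) -/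
/-- The group homomorphism `γ : (V → G) → (E → G)`,
`γ(λ)(e) = λ(t e) · λ(s e)⁻¹`, attached to a quiver `(V, E, s, t)` and a
commutative group `G`. -/
def gammaHom {V E : Type*} (s t : E → V) (G : Type*) [CommGroup G] :
    (V → G) →* (E → G) where
  toFun lam := fun e => lam (t e) * (lam (s e))⁻¹
  map_one' := by ext e; simp
  map_mul' a b := by
    ext e
    simp [mul_inv, mul_mul_mul_comm, mul_comm]

theorem tree_exists {V E : Type*} [Fintype V] [Fintype E] [Nonempty V]
    (s t : E → V) (G : Type*) [CommGroup G]
    (hconn : ∀ v w : V, Relation.EqvGen (fun a b => ∃ e, s e = a ∧ t e = b) v w)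
    (k : ℕ) (hk : k + 1 ≤ Fintype.card V) :
    ∃ (S : Finset V) (T : Finset E), S.card = k + 1 ∧ T.card = k ∧
      (∀ e ∈ T, s e ∈ S ∧ t e ∈ S) ∧
      (∀ f : E → G, ∃ lam : V → G, ∀ e ∈ T, lam (t e) * (lam (s e))⁻¹ = f e) ∧
      (∀ lam : V → G, (∀ e ∈ T, lam (t e) * (lam (s e))⁻¹ = 1) →
        ∀ v ∈ S, ∀ w ∈ S, lam v = lam w) := by
  classical
  induction k with
  | zero =>
    obtain ⟨v⟩ := ‹Nonempty V›
    refine ⟨{v}, ∅, by simp, by simp, by simp, by simp, ?_⟩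
    intro lam _ a ha b hb
    rw [Finset.mem_singleton.1 ha, Finset.mem_singleton.1 hb]
  | succ k ih =>
    obtain ⟨S, T, hS, hT, hST, hsurj, hinj⟩ := ih (by omega)
    have hcross : ∃ e, ¬ (s e ∈ S ↔ t e ∈ S) := by
      by_contra! hno
      have key : ∀ v w : V, (v ∈ S ↔ w ∈ S) := by
        intro v w
        induction hconn v w with
        | rel a b h => obtain ⟨e, rfl, rfl⟩ := h; exact hno e
        | refl a => exact Iff.rfl
        | symm a b _ h => exact h.symm
        | trans a b c _ _ h1 h2 => exact h1.trans h2
      obtain ⟨v, hv⟩ : S.Nonempty := by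
        rw [← Finset.card_pos]; omega
      have : S = Finset.univ := by
        ext w; simp [← key v w, hv]
      rw [this, Finset.card_univ] at hS
      omega
    obtain ⟨e, he⟩ := hcross
    have heT : e ∉ T := fun h => he (by simp [hST e h])
    by_cases hs : s e ∈ S
    · have ht : t e ∉ S := fun h => he (by simp [hs, h])
      have hne : s e ≠ t e := fun h => ht (h ▸ hs)
      refine ⟨insert (t e) S, insert e T, by rw [Finset.card_insert_of_notMem ht, hS],
        by rw [Finset.card_insert_of_notMem heT, hT], ?_, ?_, ?_⟩
      · intro a ha
        rcases Finset.mem_insert.1 ha with rfl | ha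
        · simp [hs]
        · simp [hST a ha]
      · intro f
        obtain ⟨lam, hl⟩ := hsurj f
        refine ⟨Function.update lam (t e) (f e * lam (s e)), ?_⟩
        intro a ha
        rcases Finset.mem_insert.1 ha with rfl | ha
        · simp [Function.update_of_ne hne]
        · have h1 : t a ≠ t e := fun h => ht (h ▸ (hST a ha).2)
          have h2 : s a ≠ t e := fun h => ht (h ▸ (hST a ha).1)
          rw [Function.update_of_ne h1, Function.update_of_ne h2, hl a ha]
      · intro lam hl
        have h1 := hinj lam (fun a ha => hl a (Finset.mem_insert_of_mem ha))
        have h2 : lam (t e) = lam (s e) :=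
          mul_inv_eq_one.1 (hl e (Finset.mem_insert_self _ _))
        have h3 : ∀ v ∈ insert (t e) S, lam v = lam (s e) := by
          intro v hv
          rcases Finset.mem_insert.1 hv with rfl | hv
          · exact h2
          · exact h1 v hv _ hs
        intro v hv w hw
        rw [h3 v hv, h3 w hw]
    · have ht : t e ∈ S := by
        by_contra h
        exact he (by simp [hs, h])
      have hne : t e ≠ s e := fun h => hs (h ▸ ht)
      refine ⟨insert (s e) S, insert e T, by rw [Finset.card_insert_of_notMem hs, hS],
        by rw [Finset.card_insert_of_notMem heT, hT], ?_, ?_, ?_⟩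
      · intro a ha
        rcases Finset.mem_insert.1 ha with rfl | ha
        · simp [ht]
        · simp [hST a ha]
      · intro f
        obtain ⟨lam, hl⟩ := hsurj f
        refine ⟨Function.update lam (s e) ((f e)⁻¹ * lam (t e)), ?_⟩
        intro a ha
        rcases Finset.mem_insert.1 ha with rfl | ha
        · simp [Function.update_of_ne hne]
        · have h1 : t a ≠ s e := fun h => hs (h ▸ (hST a ha).2)
          have h2 : s a ≠ s e := fun h => hs (h ▸ (hST a ha).1)
          rw [Function.update_of_ne h1, Function.update_of_ne h2, hl a ha]
      · intro lam hl
        have h1 := hinj lam (fun a ha => hl a (Finset.mem_insert_of_mem ha))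
        have h2 : lam (t e) = lam (s e) :=
          mul_inv_eq_one.1 (hl e (Finset.mem_insert_self _ _))
        have h3 : ∀ v ∈ insert (s e) S, lam v = lam (t e) := by
          intro v hv
          rcases Finset.mem_insert.1 hv with rfl | hv
          · exact h2.symm
          · exact h1 v hv _ ht
        intro v hv w hw
        rw [h3 v hv, h3 w hw]

/-- Extension by one outside of the complement of `T`. -/
noncomputable def extHom {E : Type*} (T : Finset E) (G : Type*) [CommGroup G] :
    ({e // e ∉ T} → G) →* (E → G) := by
  classical
  exact
  { toFun := fun g e => if h : e ∉ T then g ⟨e, h⟩ else 1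
    map_one' := by ext e; simp
    map_mul' := by
      intro a b
      ext e
      by_cases h : e ∈ T <;> simp [h] }

theorem extHom_mem {E : Type*} (T : Finset E) (G : Type*) [CommGroup G]
    (g : {e // e ∉ T} → G) (e : E) (h : e ∈ T) : extHom T G g e = 1 := by
  simp [extHom, h]

theorem extHom_not_mem {E : Type*} (T : Finset E) (G : Type*) [CommGroup G]
    (g : {e // e ∉ T} → G) (e : {e // e ∉ T}) : extHom T G g e.1 = g e := by
  simp [extHom, e.2]

/-- For a connected quiver with nonempty finite vertex set `V` and finite
arrow set `E`, and a commutative group `G`, the quotient `(E → G) / im γ` is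
isomorphic to `G^{|E| − |V| + 1}`, and `im γ` is a direct factor of
`(E → G)`. -/
theorem stmt8 {V E : Type*} [Fintype V] [Fintype E] [Nonempty V]
    (s t : E → V) (G : Type*) [CommGroup G]
    (hconn : ∀ v w : V, Relation.EqvGen (fun a b => ∃ e, s e = a ∧ t e = b) v w) :
    Nonempty ((E → G) ⧸ (gammaHom s t G).range ≃*
        (Fin (Fintype.card E + 1 - Fintype.card V) → G)) ∧
    ∃ H : Subgroup (E → G), IsCompl (gammaHom s t G).range H := by
  classical
  have hpos : 0 < Fintype.card V := Fintype.card_pos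
  obtain ⟨S, T, hS, hT, -, hsurj, hinj⟩ :=
    tree_exists s t G hconn (Fintype.card V - 1) (by omega)
  have hSu : S = Finset.univ := by
    rw [← Finset.card_eq_iff_eq_univ]; omega
  have hker : ∀ f ∈ (gammaHom s t G).range, (∀ e ∈ T, f e = 1) → f = 1 := by
    rintro f ⟨lam, rfl⟩ h
    ext e
    exact mul_inv_eq_one.2 (hinj lam h _ (by simp [hSu]) _ (by simp [hSu]))
  have hdec : ∀ f : E → G, ∃ k ∈ (gammaHom s t G).range, ∃ g, k * extHom T G g = f := by
    intro f
    obtain ⟨lam, hl⟩ := hsurj f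
    refine ⟨gammaHom s t G lam, ⟨lam, rfl⟩,
      fun e => (gammaHom s t G lam e.1)⁻¹ * f e.1, ?_⟩
    ext e
    by_cases h : e ∈ T
    · rw [Pi.mul_apply, extHom_mem T G _ e h, mul_one]
      exact hl e h
    · rw [Pi.mul_apply, extHom_not_mem T G _ ⟨e, h⟩]
      simp
  constructor
  · have hcard : Fintype.card {e // e ∉ T} = Fintype.card E + 1 - Fintype.card V := by
      rw [Fintype.card_subtype_compl, Fintype.card_coe, hT]
      omega
    let ψ : ({e // e ∉ T} → G) →* (E → G) ⧸ (gammaHom s t G).range :=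
      (QuotientGroup.mk' _).comp (extHom T G)
    have hψ : Function.Bijective ψ := by
      constructor
      · rw [injective_iff_map_eq_one]
        intro g hg
        have h1 := hker _ ((QuotientGroup.eq_one_iff _).1 hg) (extHom_mem T G g)
        ext e
        rw [← extHom_not_mem T G g e, h1]
        rfl
      · intro q
        obtain ⟨f, rfl⟩ := QuotientGroup.mk'_surjective _ q
        obtain ⟨k, hk, g, rfl⟩ := hdec f
        refine ⟨g, ?_⟩
        have : (QuotientGroup.mk' (gammaHom s t G).range) k = 1 :=
          (QuotientGroup.eq_one_iff _).2 hk
        rw [map_mul, this, one_mul]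
        rfl
    exact ⟨(MulEquiv.ofBijective ψ hψ).symm.trans
      (MulEquiv.arrowCongr (Fintype.equivFinOfCardEq hcard) (MulEquiv.refl G))⟩
  · refine ⟨(extHom T G).range, ?_⟩
    constructor
    · rw [Subgroup.disjoint_def]
      rintro f hf ⟨g, rfl⟩
      exact hker _ hf (extHom_mem T G g)
    · rw [codisjoint_iff, eq_top_iff]
      intro f _
      obtain ⟨k, hk, g, rfl⟩ := hdec f
      exact Subgroup.mul_mem_sup hk ⟨g, rfl⟩
end

section
/- Let G be a commutative group. Then the kernel of ρ equals the range of γ̃; that is, for α : (ℤ/3ℤ)³ → G one has ρ(α) = 1 if and only if there exists λ : ℤ/3ℤ × ℤ/3ℤ → G with α(i, j, k) = λ(i + k, j + 1) · λ(i, j)⁻¹ for all i, j, k. (This is the exactness at (G_m)^{Q̃₁} of the paper's exact sequence 1 → G_m → (G_m)^{Q̃₀} → (G_m)^{Q̃₁} → K → 1, where K = im ρ.) -/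
/-- Exactness at `(G_m)^{Q̃₁}`: for a commutative group `G` and
`α : (ℤ/3ℤ)³ → G`, one has `ρ(α) = 1` if and only if `α = γ̃(λ)` for some
`λ : ℤ/3ℤ × ℤ/3ℤ → G`, where
`ρ(α)(i,j,k) = α(i+j+k, 2, −j−k) · α(i+j, 1, k) · α(i, 0, j)` and
`γ̃(λ)(i,j,k) = λ(i+k, j+1) · λ(i,j)⁻¹`. -/
theorem stmt9 (G : Type*) [CommGroup G] (α : ZMod 3 × ZMod 3 × ZMod 3 → G) :
    (∀ i j k : ZMod 3,
        α (i + j + k, 2, -j - k) * α (i + j, 1, k) * α (i, 0, j) = 1) ↔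
    ∃ lam : ZMod 3 × ZMod 3 → G,
      ∀ i j k : ZMod 3, α (i, j, k) = lam (i + k, j + 1) * (lam (i, j))⁻¹ := by
  constructor
  · intro h
    -- relabel the cycles by their vertices `(p,0), (q,1), (r,2)`
    have H : ∀ p q r : ZMod 3,
        α (r, 2, p - r) * α (q, 1, r - q) * α (p, 0, q - p) = 1 := by
      intro p q r
      have := h p (q - p) (r - q)
      have e1 : p + (q - p) + (r - q) = r := by ring
      have e2 : -(q - p) - (r - q) = p - r := by ring
      have e3 : p + (q - p) = q := by ring
      rwa [e1, e2, e3] at this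
    have hb : ∀ q r : ZMod 3,
        α (q, 1, r - q) = (α (r, 2, 0 - r))⁻¹ * (α (0, 0, q - 0))⁻¹ := by
      intro q r
      have h1 := H 0 q r
      rw [mul_right_comm] at h1
      rw [eq_inv_of_mul_eq_one_right h1, mul_inv]
    have ha : ∀ p q : ZMod 3, α (p, 0, q - p) =
        α (0, 0, q - 0) * (α (0, 2, p - 0) * (α (0, 2, 0 - 0))⁻¹)⁻¹ := by
      intro p q
      have h1 := H p q 0
      rw [hb q 0] at h1
      rw [eq_inv_of_mul_eq_one_right h1]
      simp only [mul_inv, inv_inv]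
      rw [mul_comm (α (0, 0, q - 0)), mul_assoc]
    have hc : ∀ r p : ZMod 3, α (r, 2, p - r) =
        (α (0, 2, p - 0) * (α (0, 2, 0 - 0))⁻¹) * ((α (r, 2, 0 - r))⁻¹)⁻¹ := by
      intro r p
      have h1 := H p 0 r
      rw [hb 0 r, ha p 0, mul_assoc] at h1
      rw [eq_inv_of_mul_eq_one_left h1]
      generalize α (r, 2, 0 - r) = x
      generalize α (0, 0, 0 - 0) = y
      generalize α (0, 2, p - 0) = z
      generalize α (0, 2, 0 - 0) = w
      rw [mul_assoc, inv_mul_cancel_left, mul_inv, inv_inv, inv_inv, mul_comm]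
    refine ⟨fun v => if v.2 = 0 then α (0, 2, v.1 - 0) * (α (0, 2, 0 - 0))⁻¹
      else if v.2 = 1 then α (0, 0, v.1 - 0) else (α (v.1, 2, 0 - v.1))⁻¹, ?_⟩
    intro i j k
    have h01 : (1 : ZMod 3) ≠ 0 := by decide
    have h20 : (2 : ZMod 3) ≠ 0 := by decide
    have h21 : (2 : ZMod 3) ≠ 1 := by decide
    have s1 : (1 : ZMod 3) + 1 = 2 := by decide
    have s2 : (2 : ZMod 3) + 1 = 0 := by decide
    have hk : i + k - i = k := by ring
    have hj : j = 0 ∨ j = 1 ∨ j = 2 := by revert j; decide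
    rcases hj with rfl | rfl | rfl
    · have := ha i (i + k)
      rw [hk] at this
      simpa only [zero_add, h01, if_true, if_false] using this
    · have := hb i (i + k)
      rw [hk] at this
      simpa only [s1, h01, h20, h21, if_true, if_false] using this
    · have := hc i (i + k)
      rw [hk] at this
      simpa only [s2, h20, h21, if_true, if_false] using this
  · rintro ⟨l, hl⟩ i j k
    have s1 : (1 : ZMod 3) + 1 = 2 := by decide
    have s2 : (2 : ZMod 3) + 1 = 0 := by decide
    have e : i + j + k + (-j - k) = i := by ring
    rw [hl, hl, hl, e, s1, s2, zero_add]
    simp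
end

section
/- Let G be a commutative group. Then the range of ρ (the image subgroup K = im ρ inside the group of functions (ℤ/3ℤ)³ → G) is isomorphic, as a group, to G^{19}, i.e., to the group of functions from a 19-element set to G. (This is the paper's claim that K ≅ (G_m)^{|Q̃₁| − |Q̃₀| + 1} = (G_m)^{19}.) -/
/-- The group homomorphism `ρ : (G^{Q̃₁}) → (G^{scrC₃(Q̃)})` (both source and
target being functions `(ℤ/3ℤ)³ → G`), given by
`ρ(α)(i,j,k) = α(i+j+k, 2, −j−k) · α(i+j, 1, k) · α(i, 0, j)`. -/
def rhoHom (G : Type*) [CommGroup G] :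
    ((ZMod 3 × ZMod 3 × ZMod 3) → G) →* ((ZMod 3 × ZMod 3 × ZMod 3) → G) where
  toFun α := fun c =>
    α (c.1 + c.2.1 + c.2.2, 2, -c.2.1 - c.2.2) * α (c.1 + c.2.1, 1, c.2.2)
      * α (c.1, 0, c.2.1)
  map_one' := by ext c; simp
  map_mul' a b := by
    ext c
    simp only [Pi.mul_apply]
    ac_rfl

/-- Cycles `(i,j,k)` passing through at least one of the three vertices `(0,0)`, `(0,1)`, `(0,2)`. -/
abbrev BaseCycles : Type :=
  {c : ZMod 3 × ZMod 3 × ZMod 3 // c.1 = 0 ∨ c.1 + c.2.1 = 0 ∨ c.1 + c.2.1 + c.2.2 = 0}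

theorem card_baseCycles : Fintype.card BaseCycles = 19 := by decide

/-- Value of `f` on the cycle through the vertices `(p,0)`, `(q,1)`, `(r,2)`. -/
def cycVal {G : Type*} (f : (ZMod 3 × ZMod 3 × ZMod 3) → G) (p q r : ZMod 3) : G :=
  f (p, q - p, r - q)

/-- Explicit preimage under `rhoHom`, on the base cycles. -/
def liftArrow {G : Type*} [CommGroup G] (f : (ZMod 3 × ZMod 3 × ZMod 3) → G) :
    (ZMod 3 × ZMod 3 × ZMod 3) → G := fun x =>
  if x.2.1 = 0 then cycVal f x.1 (x.1 + x.2.2) 0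
  else if x.2.1 = 1 then cycVal f 0 x.1 (x.1 + x.2.2) / cycVal f 0 x.1 0
  else cycVal f (x.1 + x.2.2) 0 x.1 / (cycVal f (x.1 + x.2.2) 0 0 * cycVal f 0 0 x.1)
    * cycVal f 0 0 0

theorem cycVal_rho {G : Type*} [CommGroup G] (a : (ZMod 3 × ZMod 3 × ZMod 3) → G)
    (p q r : ZMod 3) : cycVal (rhoHom G a) p q r = a (r, 2, p - r) * a (q, 1, r - q)
      * a (p, 0, q - p) := by
  have h1 : q + (r - q) = r := by ring
  have h2 : p + (q - p) = q := by ring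
  have h3 : -(q - p) - (r - q) = p - r := by ring
  simp only [cycVal, rhoHom, MonoidHom.coe_mk, OneHom.coe_mk, h1, h2, h3]

theorem eq_cycVal {G : Type*} (f : (ZMod 3 × ZMod 3 × ZMod 3) → G)
    (c : ZMod 3 × ZMod 3 × ZMod 3) :
    f c = cycVal f c.1 (c.1 + c.2.1) (c.1 + c.2.1 + c.2.2) := by
  simp [cycVal]

theorem cycVal_rho_lift {G : Type*} [CommGroup G] (f : (ZMod 3 × ZMod 3 × ZMod 3) → G)
    (p q r : ZMod 3) (h : p = 0 ∨ q = 0 ∨ r = 0) :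
    cycVal (rhoHom G (liftArrow f)) p q r = cycVal f p q r := by
  have h20 : (2 : ZMod 3) ≠ 0 := by decide
  have h21 : (2 : ZMod 3) ≠ 1 := by decide
  have h10 : (1 : ZMod 3) ≠ 0 := by decide
  rw [cycVal_rho]
  simp only [liftArrow, h20, h21, h10, if_true, if_false, add_sub_cancel]
  rcases h with rfl | rfl | rfl
  · simp
  · have aux : ∀ x y z w : G, x / (y * z) * w * (z / w) * y = x := by
      intro x y z w
      calc x / (y * z) * w * (z / w) * y = x * (y * y⁻¹) * (z * z⁻¹) * (w * w⁻¹) := by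
            simp only [div_eq_mul_inv, mul_inv]
            generalize y⁻¹ = yy, z⁻¹ = zz, w⁻¹ = ww
            ac_rfl
        _ = x := by simp
    exact aux _ _ _ _
  · simp [div_eq_mul_inv, mul_comm]

theorem rho_inclusion_exclusion {G : Type*} [CommGroup G]
    (a : (ZMod 3 × ZMod 3 × ZMod 3) → G) (p q r : ZMod 3) :
    cycVal (rhoHom G a) p q r =
      cycVal (rhoHom G a) p q 0 * cycVal (rhoHom G a) 0 q r * cycVal (rhoHom G a) p 0 r
      * cycVal (rhoHom G a) 0 0 0 / (cycVal (rhoHom G a) p 0 0 * cycVal (rhoHom G a) 0 q 0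
        * cycVal (rhoHom G a) 0 0 r) := by
  simp only [cycVal_rho]
  rw [eq_div_iff_mul_eq']
  ac_rfl

/-- The image subgroup `K = im ρ` inside the group of functions
`(ℤ/3ℤ)³ → G` is isomorphic to `G^{19}`. -/
theorem stmt10 (G : Type*) [CommGroup G] :
    Nonempty ((rhoHom G).range ≃* (Fin 19 → G)) := by
  let φ : (rhoHom G).range →* (BaseCycles → G) :=
    { toFun := fun f c => f.1 c.1
      map_one' := rfl
      map_mul' := fun _ _ => rfl }
  have hφ : Function.Bijective φ := by
    constructor
    · rintro ⟨_, a, rfl⟩ ⟨_, b, rfl⟩ hab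
      have key : ∀ p q r : ZMod 3, (p = 0 ∨ q = 0 ∨ r = 0) →
          cycVal (rhoHom G a) p q r = cycVal (rhoHom G b) p q r := by
        intro p q r h
        exact congrFun hab ⟨(p, q - p, r - q), by simpa using h⟩
      apply Subtype.ext
      funext c
      change rhoHom G a c = rhoHom G b c
      rw [eq_cycVal (rhoHom G a), eq_cycVal (rhoHom G b), rho_inclusion_exclusion a,
        rho_inclusion_exclusion b]
      simp only [key _ _ 0 (by simp), key _ 0 _ (by simp), key 0 _ _ (by simp)]
    · intro g
      let f : (ZMod 3 × ZMod 3 × ZMod 3) → G := fun c =>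
        if h : c.1 = 0 ∨ c.1 + c.2.1 = 0 ∨ c.1 + c.2.1 + c.2.2 = 0 then g ⟨c, h⟩ else 1
      refine ⟨⟨rhoHom G (liftArrow f), liftArrow f, rfl⟩, ?_⟩
      funext c
      change rhoHom G (liftArrow f) c.1 = g c
      rw [eq_cycVal (rhoHom G (liftArrow f)), cycVal_rho_lift f _ _ _ c.2, ← eq_cycVal f]
      exact dif_pos c.2
  let e : BaseCycles ≃ Fin 19 := Fintype.equivFinOfCardEq card_baseCycles
  exact ⟨(MulEquiv.ofBijective φ hφ).trans
    { Equiv.arrowCongr e (Equiv.refl G) with map_mul' := fun _ _ => rfl }⟩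
end

section
/- Define the linear map ρ̂ : ((ℤ/3ℤ)³ → ℝ) → ((ℤ/3ℤ)³ → ℝ) by ρ̂(y)(i, j, k) = y(i + j + k, 2, −j − k) + y(i + j, 1, k) + y(i, 0, j) (the map on cocharacter lattices induced by ρ). If x : (ℤ/3ℤ)³ → ℝ satisfies x(c) ≥ 0 for all c and Σ_c x(c) · ρ̂(y)(c) = 0 for every y : (ℤ/3ℤ)³ → ℝ, then x = 0. (This is the strong convexity of the effective cone A⁺(M) in the paper's Lemma 5.3: the cone generated by the restrictions of the coordinate functionals e_c to the image lattice L = im ρ̂ is salient, which implies projectivity of the GIT quotients M̄_χ.) -/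
/-- The linear map `ρ̂` on `(ℤ/3ℤ)³ → ℝ` induced by `ρ` on cocharacter
lattices: `ρ̂(y)(i,j,k) = y(i+j+k, 2, −j−k) + y(i+j, 1, k) + y(i, 0, j)`. -/
def rhoHat (y : ZMod 3 × ZMod 3 × ZMod 3 → ℝ) : ZMod 3 × ZMod 3 × ZMod 3 → ℝ :=
  fun c =>
    y (c.1 + c.2.1 + c.2.2, 2, -c.2.1 - c.2.2) + y (c.1 + c.2.1, 1, c.2.2)
      + y (c.1, 0, c.2.1)

/-- Strong convexity of the effective cone: if `x : (ℤ/3ℤ)³ → ℝ` is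
pointwise nonnegative and orthogonal to the image of `ρ̂`, then `x = 0`. -/
theorem stmt12 (x : ZMod 3 × ZMod 3 × ZMod 3 → ℝ)
    (hx : ∀ c, 0 ≤ x c)
    (horth : ∀ y : ZMod 3 × ZMod 3 × ZMod 3 → ℝ,
      ∑ c : ZMod 3 × ZMod 3 × ZMod 3, x c * rhoHat y c = 0) :
    x = 0 := by
  have h := horth (fun _ => 1)
  rw [Finset.sum_eq_zero_iff_of_nonneg
    (fun c _ => mul_nonneg (hx c) (by simp only [rhoHat]; norm_num))] at h
  funext c
  have hc := h c (Finset.mem_univ c)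
  simp only [rhoHat] at hc
  simp only [Pi.zero_apply]
  linarith
end

section
/- Let k be a field, let V and E be types with maps s, t : E → V (a quiver), and let c : E → kˣ be a family of nonzero scalars, viewed as the representation of the quiver assigning the one-dimensional k-module k to each vertex and multiplication by c(e) to each arrow e. Then the assignment W ↦ { v ∈ V : W(v) = ⊤ } is a bijection from the set of subrepresentations, i.e., families W : V → Submodule k k such that for every arrow e the image of W(s e) under multiplication by c(e) is contained in W(t e), onto the set of subsets S ⊆ V such that for every arrow e, s e ∈ S implies t e ∈ S. (This is the paper's claim that submodules of a kQ-module of dimension vector (1,…,1) attached to a point of the dense torus correspond bijectively to arrow-closed subsets of the vertex set.) -/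
/-- Let `(V, E, s, t)` be a quiver, `k` a field, and `c : E → kˣ` a family of
nonzero scalars, viewed as the representation of the quiver assigning the
one-dimensional module `k` to each vertex and multiplication by `c e` to each
arrow `e`.  The assignment `W ↦ {v | W v = ⊤}` is a bijection from the set of
subrepresentations (families `W : V → Submodule k k` with
`(c e) • W(s e) ≤ W(t e)` for every arrow `e`) onto the set of arrow-closed
subsets of `V`. -/
theorem stmt13 (k : Type*) [Field k] {V E : Type*} (s t : E → V) (c : E → kˣ) :
    Set.BijOn (fun W : V → Submodule k k => {v | W v = ⊤})
      {W : V → Submodule k k |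
        ∀ e, (W (s e)).map (((c e : k) • LinearMap.id : k →ₗ[k] k)) ≤ W (t e)}
      {S : Set V | ∀ e, s e ∈ S → t e ∈ S} := by
  have dich : ∀ I : Submodule k k, I = ⊥ ∨ I = ⊤ := fun I => eq_bot_or_eq_top I
  refine ⟨?_, ?_, ?_⟩
  · intro W hW e he
    have h1 : W (s e) = ⊤ := he
    have h2 := hW e
    rw [h1] at h2
    change W (t e) = ⊤
    rw [eq_top_iff]
    intro x _
    apply h2
    refine Submodule.mem_map.mpr ⟨((c e)⁻¹ : kˣ) * x, Submodule.mem_top, ?_⟩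
    simp
  · intro W _ W' _ h
    funext v
    have hv : W v = ⊤ ↔ W' v = ⊤ := Set.ext_iff.mp h v
    rcases dich (W v) with h1 | h1
    · rcases dich (W' v) with h2 | h2
      · rw [h1, h2]
      · rw [h2, hv.mpr h2]
    · rw [h1, hv.mp h1]
  · intro S hS
    classical
    refine ⟨fun v => if v ∈ S then ⊤ else ⊥, ?_, ?_⟩
    · intro e
      change Submodule.map _ (if s e ∈ S then ⊤ else ⊥) ≤ (if t e ∈ S then (⊤ : Submodule k k) else ⊥)
      by_cases h : s e ∈ S
      · rw [if_pos (hS e h)]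
        exact fun _ _ => Submodule.mem_top
      · rw [if_neg h, Submodule.map_bot]
        intro x hx
        rw [(Submodule.mem_bot k).mp hx]
        exact Submodule.zero_mem _
    · ext v
      change (if v ∈ S then (⊤ : Submodule k k) else ⊥) = ⊤ ↔ v ∈ S
      by_cases h : v ∈ S
      · rw [if_pos h]
        exact ⟨fun _ => h, fun _ => rfl⟩
      · rw [if_neg h]
        refine ⟨fun hb => ?_, fun h' => absurd h' h⟩
        have h1 : (1 : k) ∈ (⊥ : Submodule k k) := by
          rw [hb]
          exact Submodule.mem_top
        exact absurd ((Submodule.mem_bot k).mp h1) one_ne_zero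
end
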